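/- arXiv:2308.14351 — 7 statements merged into one kernel-verified Lean document; each statement's English description precedes it below -/
import Mathlib

section
/- Let R be a nontrivial commutative ring and let G be a subgroup of UT₃(R) containing a₁ and a₂. Then C_G(a₁) ∩ C_G(a₂) = Z(G), i.e. the intersection of the centralizers in G of a₁ and of a₂ equals the center of G. -/
open Matrix

/-- A 3×3 matrix is *upper unitriangular* if all diagonal entries are `1`
and all entries below the diagonal are `0`. -/
def IsUnitriangular {R : Type*} [CommRing R] (M : Matrix (Fin 3) (Fin 3) R) : Prop :=
  (∀ i, M i i = 1) ∧ ∀ i j : Fin 3, j < i → M i j = 0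

/-- The upper unitriangular matrix with above-diagonal entries `a b c`, as a unit. -/
def ut {R : Type*} [CommRing R] (a b c : R) : (Matrix (Fin 3) (Fin 3) R)ˣ where
  val := !![1, a, b; 0, 1, c; 0, 0, 1]
  inv := !![1, -a, a * c - b; 0, 1, -c; 0, 0, 1]
  val_inv := by
    ext i j
    fin_cases i <;> fin_cases j <;>
      simp [Matrix.mul_apply, Fin.sum_univ_three, Matrix.one_apply, Matrix.vecHead, Matrix.vecTail] <;> ring
  inv_val := by
    ext i j
    fin_cases i <;> fin_cases j <;>
      simp [Matrix.mul_apply, Fin.sum_univ_three, Matrix.one_apply, Matrix.vecHead, Matrix.vecTail] <;> ring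

lemma ut_eq_iff {R : Type*} [CommRing R] (g : (Matrix (Fin 3) (Fin 3) R)ˣ) :
    IsUnitriangular (g : Matrix (Fin 3) (Fin 3) R) ↔
      ∃ a b c : R, g = ut a b c := by
  constructor
  · rintro ⟨h1, h2⟩
    refine ⟨(g : Matrix (Fin 3) (Fin 3) R) 0 1, (g : Matrix (Fin 3) (Fin 3) R) 0 2,
      (g : Matrix (Fin 3) (Fin 3) R) 1 2, Units.ext ?_⟩
    ext i j
    fin_cases i <;> fin_cases j <;>
      simp [ut, Matrix.vecHead, Matrix.vecTail, h1, h2 1 0 (by decide), h2 2 0 (by decide), h2 2 1 (by decide)]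
  · rintro ⟨a, b, c, rfl⟩
    constructor
    · intro i; fin_cases i <;> simp [ut]
    · intro i j hij
      fin_cases i <;> fin_cases j <;> simp_all [ut, Matrix.vecHead, Matrix.vecTail]

/-- `UT₃(R)`: the group of 3×3 upper unitriangular matrices over `R`, realized as the
subgroup of units of the matrix ring whose underlying matrices are upper unitriangular. -/
def UT3 (R : Type*) [CommRing R] : Subgroup (Matrix (Fin 3) (Fin 3) R)ˣ where
  carrier := {g | IsUnitriangular (g : Matrix (Fin 3) (Fin 3) R)}
  one_mem' := by
    constructor
    · intro i; simp
    · intro i j hij; simp [Matrix.one_apply, hij.ne']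
  mul_mem' := by
    intro a b ha hb
    rw [Set.mem_setOf_eq, ut_eq_iff] at *
    obtain ⟨a1, a2, a3, rfl⟩ := ha
    obtain ⟨b1, b2, b3, rfl⟩ := hb
    refine ⟨a1 + b1, a2 + b2 + a1 * b3, a3 + b3, Units.ext ?_⟩
    ext i j
    fin_cases i <;> fin_cases j <;>
      simp [ut, Matrix.mul_apply, Fin.sum_univ_three, Matrix.vecHead, Matrix.vecTail] <;> ring
  inv_mem' := by
    intro a ha
    rw [Set.mem_setOf_eq, ut_eq_iff] at *
    obtain ⟨a1, a2, a3, rfl⟩ := ha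
    refine ⟨-a1, a1 * a3 - a2, -a3, Units.ext ?_⟩
    rfl

/-- The generator `a₁` of the Heisenberg group: `(2,3)`-entry `1`, other
above-diagonal entries `0`. -/
def genA1 (R : Type*) [CommRing R] : (Matrix (Fin 3) (Fin 3) R)ˣ := ut 0 0 1

/-- The generator `a₂` of the Heisenberg group: `(1,2)`-entry `1`, other
above-diagonal entries `0`. -/
def genA2 (R : Type*) [CommRing R] : (Matrix (Fin 3) (Fin 3) R)ˣ := ut 1 0 0

lemma genA1_mem (R : Type*) [CommRing R] : genA1 R ∈ UT3 R :=
  (ut_eq_iff _).mpr ⟨0, 0, 1, rfl⟩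

lemma genA2_mem (R : Type*) [CommRing R] : genA2 R ∈ UT3 R :=
  (ut_eq_iff _).mpr ⟨1, 0, 0, rfl⟩

section Heisenberg

variable {R : Type*} [CommRing R]

lemma ut_mul_ut (a b c a' b' c' : R) :
    ut a b c * ut a' b' c' = ut (a + a') (b + b' + a * c') (c + c') :=
  Units.ext <| by simp [ut, add_comm, add_left_comm, add_assoc]

lemma ut_inj {a b c a' b' c' : R} :
    ut a b c = ut a' b' c' ↔ a = a' ∧ b = b' ∧ c = c' := by
  refine ⟨fun h ↦ ?_, by rintro ⟨rfl, rfl, rfl⟩; rfl⟩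
  have entry_eq (i j : Fin 3) : (ut a b c).val i j = (ut a' b' c').val i j := by rw [h]
  exact ⟨entry_eq 0 1, entry_eq 0 2, entry_eq 1 2⟩

/- The commutator of the two matrices is `ut 0 (a * c' - a' * c) 0`, so they commute exactly when
the alternating form `a * c' - a' * c` vanishes on their images in the abelianization `R × R`. -/
lemma commute_ut_ut_iff {a b c a' b' c' : R} :
    Commute (ut a b c) (ut a' b' c') ↔ a * c' = a' * c := by
  rw [commute_iff_eq, ut_mul_ut, ut_mul_ut, ut_inj, and_iff_right (add_comm a a'),
    and_iff_left (add_comm c c')]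
  constructor <;> intro h <;> linear_combination h

lemma commute_ut_genA1_iff {a b c : R} : Commute (ut a b c) (genA1 R) ↔ a = 0 := by
  simp [genA1, commute_ut_ut_iff]

lemma commute_ut_genA2_iff {a b c : R} : Commute (ut a b c) (genA2 R) ↔ c = 0 := by
  simp [genA2, commute_ut_ut_iff, eq_comm]

lemma commute_of_commute_genA1_of_commute_genA2 {x y : (Matrix (Fin 3) (Fin 3) R)ˣ}
    (hx : x ∈ UT3 R) (hy : y ∈ UT3 R) (hx₁ : Commute x (genA1 R)) (hx₂ : Commute x (genA2 R)) :
    Commute x y := by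
  obtain ⟨a, b, c, rfl⟩ := (ut_eq_iff x).mp hx
  obtain ⟨a', b', c', rfl⟩ := (ut_eq_iff y).mp hy
  obtain rfl : a = 0 := commute_ut_genA1_iff.mp hx₁
  obtain rfl : c = 0 := commute_ut_genA2_iff.mp hx₂
  rw [commute_ut_ut_iff, zero_mul, mul_zero]

end Heisenberg

/-- For a subgroup `G ≤ UT₃(R)` containing `a₁` and `a₂` (`R` a nontrivial
commutative ring), `C_G(a₁) ∩ C_G(a₂) = Z(G)`. -/
theorem centralizers_inf_eq_center (R : Type*) [CommRing R] [Nontrivial R]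
    (G : Subgroup (Matrix (Fin 3) (Fin 3) R)ˣ) (hG : G ≤ UT3 R)
    (h1 : genA1 R ∈ G) (h2 : genA2 R ∈ G) :
    Subgroup.centralizer ({⟨genA1 R, h1⟩} : Set G) ⊓
        Subgroup.centralizer ({⟨genA2 R, h2⟩} : Set G) =
      Subgroup.center G := by
  refine le_antisymm ?_
    (le_inf (Subgroup.center_le_centralizer _) (Subgroup.center_le_centralizer _))
  rintro x ⟨hx₁, hx₂⟩
  have commute_genA1 : Commute (x : (Matrix (Fin 3) (Fin 3) R)ˣ) (genA1 R) :=
    congrArg Subtype.val (Subgroup.mem_centralizer_singleton_iff.mp hx₁)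
  have commute_genA2 : Commute (x : (Matrix (Fin 3) (Fin 3) R)ˣ) (genA2 R) :=
    congrArg Subtype.val (Subgroup.mem_centralizer_singleton_iff.mp hx₂)
  refine Subgroup.mem_center_iff.mpr fun y ↦ Subtype.ext ?_
  exact (commute_of_commute_genA1_of_commute_genA2 (hG x.2) (hG y.2)
    commute_genA1 commute_genA2).symm
end

section
/- Let R be a nontrivial commutative ring. The group UT₃(R) satisfies the sentence τ (for all x₁, x₂ ∈ UT₃(R) with [x₂,x₁]=1, [a₂,x₂]=1 and [x₁,a₁]=1, either [x₂,a₁]=1 or [a₂,x₁]=1) if and only if R is an integral domain. -/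
open Matrix

/-- The sentence `τ`: for all `x₁ x₂` in `G` with `[x₂,x₁] = 1`, `[a₂,x₂] = 1` and
`[x₁,a₁] = 1`, either `[x₂,a₁] = 1` or `[a₂,x₁] = 1` (commutators `[y,x] = y⁻¹x⁻¹yx`). -/
def SatisfiesTau (R : Type*) [CommRing R] (G : Subgroup (Matrix (Fin 3) (Fin 3) R)ˣ) : Prop :=
  ∀ x₁ ∈ G, ∀ x₂ ∈ G,
    x₂⁻¹ * x₁⁻¹ * x₂ * x₁ = 1 →
    (genA2 R)⁻¹ * x₂⁻¹ * genA2 R * x₂ = 1 →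
    x₁⁻¹ * (genA1 R)⁻¹ * x₁ * genA1 R = 1 →
    (x₂⁻¹ * (genA1 R)⁻¹ * x₂ * genA1 R = 1 ∨ (genA2 R)⁻¹ * x₁⁻¹ * genA2 R * x₁ = 1)

/-!
Writing the elements of `UT₃(R)` as `ut a b c`, only the entries `a` and `c` matter for
commutation: `ut a b c` and `ut a' b' c'` commute exactly when `a * c' = a' * c`. Hence the premises
`[a₂,x₂] = 1` and `[x₁,a₁] = 1` of `τ` force `x₂ = ut p q 0` and `x₁ = ut 0 t u`, the premise
`[x₂,x₁] = 1` becomes `p * u = 0`, and the two alternatives become `p = 0` and `u = 0`. Since every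
pair `p`, `u` of elements of `R` arises in this way, `τ` says that `R` has no zero divisors.
-/

lemma inv_mul_inv_mul_mul_eq_one_iff_commute {G : Type*} [Group G] (g h : G) :
    g⁻¹ * h⁻¹ * g * h = 1 ↔ Commute g h := by
  simpa [commutatorElement_def] using commutatorElement_eq_one_iff_commute (g₁ := g⁻¹) (g₂ := h⁻¹)

section

variable {R : Type*} [CommRing R]

lemma satisfiesTau_iff_commute (G : Subgroup (Matrix (Fin 3) (Fin 3) R)ˣ) :
    SatisfiesTau R G ↔ ∀ x₁ ∈ G, ∀ x₂ ∈ G,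
      Commute x₂ x₁ → Commute (genA2 R) x₂ → Commute x₁ (genA1 R) →
        Commute x₂ (genA1 R) ∨ Commute (genA2 R) x₁ := by
  simp only [SatisfiesTau, inv_mul_inv_mul_mul_eq_one_iff_commute]

lemma mem_UT3_iff {g : (Matrix (Fin 3) (Fin 3) R)ˣ} :
    g ∈ UT3 R ↔ ∃ a b c : R, g = ut a b c :=
  ut_eq_iff g

lemma ut_mem_UT3 (a b c : R) : ut a b c ∈ UT3 R :=
  mem_UT3_iff.mpr ⟨a, b, c, rfl⟩

lemma commute_genA2_ut_iff {a b c : R} : Commute (genA2 R) (ut a b c) ↔ c = 0 := by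
  simp [genA2, commute_ut_ut_iff]

end

/-- For a nontrivial commutative ring `R`, the group `UT₃(R)` satisfies
the sentence `τ` if and only if `R` is an integral domain. -/
theorem UT3_satisfiesTau_iff_isDomain (R : Type*) [CommRing R] [Nontrivial R] :
    SatisfiesTau R (UT3 R) ↔ IsDomain R := by
  rw [satisfiesTau_iff_commute]
  constructor
  · intro tau
    have : NoZeroDivisors R := by
      refine ⟨fun {p u} hpu => ?_⟩
      have h_comm : Commute (ut p 0 0) (ut 0 0 u) := by
        simpa [commute_ut_ut_iff] using hpu
      simpa only [commute_ut_genA1_iff, commute_genA2_ut_iff] using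
        tau (ut 0 0 u) (ut_mem_UT3 0 0 u) (ut p 0 0) (ut_mem_UT3 p 0 0) h_comm
          (commute_genA2_ut_iff.mpr rfl) (commute_ut_genA1_iff.mpr rfl)
    exact NoZeroDivisors.to_isDomain R
  · intro _ x₁ hx₁ x₂ hx₂
    obtain ⟨s, t, u, rfl⟩ := mem_UT3_iff.mp hx₁
    obtain ⟨p, q, r, rfl⟩ := mem_UT3_iff.mp hx₂
    simp only [commute_ut_ut_iff, commute_ut_genA1_iff, commute_genA2_ut_iff]
    rintro hpu rfl rfl
    exact mul_eq_zero.mp (by simpa using hpu)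
end

section
/- Let R be a commutative ring such that for every nonzero r ∈ R there is a ring homomorphism φ: R → ℤ with φ(r) ≠ 0 (R is residually-ℤ). Then the following are equivalent: (i) R is an integral domain; (ii) R is ω-residually-ℤ, i.e. for every finite list r₁, …, r_n of nonzero elements of R there is a single ring homomorphism φ: R → ℤ with φ(rᵢ) ≠ 0 for all i. -/
/-- The maps in `F` separate each nonzero element from `0`. A ring `R` is residually-`S` when this
holds for `F = R →+* S`; leaving `F` free covers homomorphisms of other structures as well. -/
def Residually (F : Type*) {M N : Type*} [FunLike F M N] [Zero M] [Zero N] : Prop :=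
  ∀ r : M, r ≠ 0 → ∃ φ : F, φ r ≠ 0

/-- A single map in `F` can be chosen to separate any given finite list of nonzero elements
from `0`. A ring `R` is ω-residually-`S` when this holds for `F = R →+* S`. -/
def OmegaResidually (F : Type*) {M N : Type*} [FunLike F M N] [Zero M] [Zero N] : Prop :=
  ∀ l : List M, (∀ r ∈ l, r ≠ 0) → ∃ φ : F, ∀ r ∈ l, φ r ≠ 0

theorem map_ne_zero_of_mem_of_map_list_prod_ne_zero {F M N : Type*} [Monoid M] [MonoidWithZero N]
    [FunLike F M N] [MonoidHomClass F M N] {φ : F} {l : List M} (hl : φ l.prod ≠ 0)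
    {r : M} (hr : r ∈ l) : φ r ≠ 0 := by
  intro hφr
  apply hl
  rw [map_list_prod]
  exact List.prod_eq_zero (List.mem_map.mpr ⟨r, hr, hφr⟩)

theorem Residually.omegaResidually {F M N : Type*} [MonoidWithZero M] [NoZeroDivisors M]
    [Nontrivial M] [MonoidWithZero N] [FunLike F M N] [MonoidHomClass F M N]
    (h : Residually F) : OmegaResidually F := by
  intro l hl
  have hprod : l.prod ≠ 0 := List.prod_ne_zero fun h0 ↦ hl 0 h0 rfl
  obtain ⟨φ, hφ⟩ := h l.prod hprod
  exact ⟨φ, fun _ hr ↦ map_ne_zero_of_mem_of_map_list_prod_ne_zero hφ hr⟩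

theorem OmegaResidually.noZeroDivisors {F M N : Type*} [MulZeroClass M] [MulZeroClass N]
    [NoZeroDivisors N] [FunLike F M N] [MulHomClass F M N] [ZeroHomClass F M N]
    (h : OmegaResidually F) : NoZeroDivisors M where
  eq_zero_or_eq_zero_of_mul_eq_zero {a b} hab := by
    by_contra! hne
    obtain ⟨φ, hφ⟩ := h [a, b] (by simpa using hne)
    have hφab : φ a * φ b = 0 := by rw [← map_mul, hab, map_zero]
    exact mul_ne_zero (hφ a (by simp)) (hφ b (by simp)) hφab

theorem isDomain_iff_omega_residually_int_general {F R S : Type*} [Ring R] [Nontrivial R]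
    [MonoidWithZero S] [NoZeroDivisors S] [FunLike F R S] [MonoidWithZeroHomClass F R S]
    (hres : Residually F) : IsDomain R ↔ OmegaResidually F := by
  constructor
  · intro _
    exact hres.omegaResidually
  · intro homega
    have := homega.noZeroDivisors
    exact NoZeroDivisors.to_isDomain R

/-- A residually-ℤ commutative ring is an integral domain if and only if
it is ω-residually-ℤ: every finite list of nonzero elements can be simultaneously
not annihilated by a single ring homomorphism to ℤ. -/
theorem isDomain_iff_omega_residually_int (R : Type*) [CommRing R] [Nontrivial R]
    (hres : ∀ r : R, r ≠ 0 → ∃ φ : R →+* ℤ, φ r ≠ 0) :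
    IsDomain R ↔
      ∀ l : List R, (∀ r ∈ l, r ≠ 0) → ∃ φ : R →+* ℤ, ∀ r ∈ l, φ r ≠ 0 :=
  isDomain_iff_omega_residually_int_general hres
end

section
/- Let G be a group of nilpotency class at most 2 (i.e. the commutator subgroup [G,G] is contained in the center Z(G)), let G₀ be a subgroup of G and let Y ∈ G. Then every element of the subgroup generated by G₀ ∪ {Y} can be written in the form u · Yⁿ · [Y,w] for some u, w ∈ G₀ and n ∈ ℤ. -/
/-!
Suppose every commutator `[Y, w]` with `w ∈ G₀` commutes with `G₀` and with `Y`. Then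
`w ↦ [Y, w]` is a homomorphism on `G₀`, and raising `w⁻¹ * Y * w = Y * [Y, w]` to the power `m`
gives `Y ^ m * w = w * Y ^ m * [Y, w ^ m]`. Hence the elements `u * Y ^ n * [Y, w]` are preserved
by left multiplication by powers of `Y`: the power moves past `u`, and the commutator this creates
moves to the right, where it is absorbed by `[Y, w]`.
-/

section RightCommutator

variable {G : Type*} [Group G]

/-- The commutator `[y, x]` in the convention for which `x⁻¹ * y * x = y * [y, x]`. It differs from
Mathlib's `⁅y, x⁆ = y * x * y⁻¹ * x⁻¹`. -/
def rightCommutator (y x : G) : G := y⁻¹ * x⁻¹ * y * x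

theorem mul_mul_rightCommutator (y x : G) : x * (y * rightCommutator y x) = y * x := by
  simp [rightCommutator, mul_assoc]

theorem rightCommutator_mul_eq_mul_conj (y a b : G) :
    rightCommutator y (a * b) = rightCommutator y b * (b⁻¹ * rightCommutator y a * b) := by
  simp [rightCommutator, mul_assoc]

theorem rightCommutator_mul {y a b : G} (hy : Commute (rightCommutator y a) y)
    (hb : Commute (rightCommutator y a) b) :
    rightCommutator y (a * b) = rightCommutator y a * rightCommutator y b := by
  have h_comm : Commute (rightCommutator y a) (rightCommutator y b) :=
    ((hy.inv_right.mul_right hb.inv_right).mul_right hy).mul_right hb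
  have h_conj : b⁻¹ * rightCommutator y a * b = rightCommutator y a := by
    rw [mul_assoc, hb.eq, inv_mul_cancel_left]
  rw [rightCommutator_mul_eq_mul_conj, h_conj, h_comm.eq]

theorem zpow_mul_eq_mul_zpow_mul_rightCommutator_zpow {y x : G}
    (h : Commute (rightCommutator y x) y) (m : ℤ) :
    y ^ m * x = x * y ^ m * rightCommutator y x ^ m := by
  have h_semiconj : SemiconjBy x (y * rightCommutator y x) y := mul_mul_rightCommutator y x
  calc y ^ m * x = x * (y * rightCommutator y x) ^ m := (h_semiconj.zpow_right m).eq.symm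
    _ = x * y ^ m * rightCommutator y x ^ m := by rw [h.symm.mul_zpow, mul_assoc]

variable {H : Subgroup G} {y : G}

/-- The map `x ↦ [y, x]` on a subgroup `H`, as a homomorphism into the ambient group. -/
def rightCommutatorHom
    (h : ∀ x ∈ H, rightCommutator y x ∈ Subgroup.centralizer (↑H ∪ {y})) : H →* G :=
  MonoidHom.mk' (fun x ↦ rightCommutator y x) fun a b ↦
    rightCommutator_mul (h a a.2 y (.inr rfl)).symm (h a a.2 b (.inl b.2)).symm

theorem zpow_mul_mul_zpow_mul_rightCommutatorHom
    (h : ∀ x ∈ H, rightCommutator y x ∈ Subgroup.centralizer (↑H ∪ {y})) (u w : H) (m n : ℤ) :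
    y ^ m * (u * y ^ n * rightCommutatorHom h w) =
      u * y ^ (m + n) * rightCommutatorHom h (u ^ m * w) := by
  have h_comm : Commute (rightCommutatorHom h u) y := (h u u.2 y (.inr rfl)).symm
  have h_move : y ^ m * u = u * y ^ m * rightCommutatorHom h u ^ m :=
    zpow_mul_eq_mul_zpow_mul_rightCommutator_zpow h_comm m
  calc y ^ m * (u * y ^ n * rightCommutatorHom h w)
      = y ^ m * u * y ^ n * rightCommutatorHom h w := by simp only [mul_assoc]
    _ = u * y ^ m * (rightCommutatorHom h u ^ m * y ^ n) * rightCommutatorHom h w := by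
        rw [h_move, mul_assoc _ _ (y ^ n)]
    _ = u * y ^ m * (y ^ n * rightCommutatorHom h u ^ m) * rightCommutatorHom h w := by
        rw [(h_comm.zpow_zpow m n).eq]
    _ = u * y ^ (m + n) * rightCommutatorHom h (u ^ m * w) := by
        simp only [zpow_add, map_mul, map_zpow, mul_assoc]

end RightCommutator

theorem mem_closure_insert_eq_form_general {G : Type*} [Group G] (G₀ : Subgroup G) (Y : G)
    (h : ∀ w ∈ G₀, rightCommutator Y w ∈ Subgroup.centralizer (↑G₀ ∪ {Y})) :
    ∀ g ∈ Subgroup.closure (↑G₀ ∪ {Y}),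
      ∃ u ∈ G₀, ∃ w ∈ G₀, ∃ n : ℤ, g = u * Y ^ n * rightCommutator Y w := by
  suffices h_form : ∀ g ∈ Subgroup.closure (↑G₀ ∪ {Y}),
      ∃ (u w : G₀) (n : ℤ), g = u * Y ^ n * rightCommutatorHom h w by
    intro g hg
    obtain ⟨u, w, n, rfl⟩ := h_form g hg
    exact ⟨u, u.2, w, w.2, n, rfl⟩
  intro g hg
  induction hg using Subgroup.closure_induction_left with
  | one => exact ⟨1, 1, 0, by simp⟩
  | mul_left x hx g _ ih =>
    obtain ⟨u, w, n, rfl⟩ := ih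
    obtain hx | rfl := hx
    · exact ⟨⟨x, hx⟩ * u, w, n, by simp [mul_assoc]⟩
    · exact ⟨u, u ^ (1 : ℤ) * w, 1 + n, by
        rw [← zpow_mul_mul_zpow_mul_rightCommutatorHom, zpow_one]⟩
  | inv_mul_cancel x hx g _ ih =>
    obtain ⟨u, w, n, rfl⟩ := ih
    obtain hx | rfl := hx
    · exact ⟨⟨x, hx⟩⁻¹ * u, w, n, by simp [mul_assoc]⟩
    · exact ⟨u, u ^ (-1 : ℤ) * w, -1 + n, by
        rw [← zpow_mul_mul_zpow_mul_rightCommutatorHom, zpow_neg_one]⟩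

/-- In a group `G` of nilpotency class at most 2 (i.e. all commutators
are central), every element of the subgroup generated by a subgroup `G₀` together with an
element `Y` has the form `u · Yⁿ · [Y,w]` with `u, w ∈ G₀` and `n : ℤ`
(commutators `[y,x] = y⁻¹x⁻¹yx`). -/
theorem mem_closure_insert_eq_form {G : Type*} [Group G]
    (hnil : ∀ x y : G, y⁻¹ * x⁻¹ * y * x ∈ Subgroup.center G)
    (G₀ : Subgroup G) (Y : G) :
    ∀ g ∈ Subgroup.closure (↑G₀ ∪ {Y}),
      ∃ u ∈ G₀, ∃ w ∈ G₀, ∃ n : ℤ, g = u * Y ^ n * (Y⁻¹ * w⁻¹ * Y * w) :=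
  mem_closure_insert_eq_form_general G₀ Y fun w _ ↦ Subgroup.center_le_centralizer _ (hnil w Y)
end

section
/- Let R be a nontrivial commutative ring that is locally residually-ℤ and let G be a subgroup of UT₃(R) containing a₁ and a₂. Suppose C_G(a₁) ⊆ ⟨a₁⟩·Z(G) and C_G(a₂) ⊆ ⟨a₂⟩·Z(G) (i.e. every element of the centralizer of aᵢ in G is a power of aᵢ times a central element of G, for i = 1, 2). Then the representation G ≤ UT₃(R) satisfies the Lame Property. -/
open Matrix

/-- A commutative ring `R` is *locally residually-ℤ* if for every finitely generated
subring `R₀` of `R` and every nonzero `r ∈ R₀` there is a ring homomorphism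
`φ : R₀ →+* ℤ` with `φ r ≠ 0`. -/
def LocResZ (R : Type*) [CommRing R] : Prop :=
  ∀ R₀ : Subring R, (∃ s : Finset R, R₀ = Subring.closure ↑s) →
    ∀ r : R₀, r ≠ 0 → ∃ φ : R₀ →+* ℤ, φ r ≠ 0

/-- The representation `G ≤ UT₃(R)` satisfies the *Lame Property* if for every
`g ∈ C_G(a₁) ∪ C_G(a₂)`, either `g₁₂² + g₂₃² = 0` or `g₁₂² + g₂₃²` is not a zero
divisor in `R`. -/
def LameProperty (R : Type*) [CommRing R] (G : Subgroup (Matrix (Fin 3) (Fin 3) R)ˣ) : Prop :=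
  ∀ g ∈ G, (g * genA1 R = genA1 R * g ∨ g * genA2 R = genA2 R * g) →
    ((g : Matrix (Fin 3) (Fin 3) R) 0 1 ^ 2 + (g : Matrix (Fin 3) (Fin 3) R) 1 2 ^ 2 = 0 ∨
      (g : Matrix (Fin 3) (Fin 3) R) 0 1 ^ 2 + (g : Matrix (Fin 3) (Fin 3) R) 1 2 ^ 2 ∈
        nonZeroDivisors R)

/-!
A matrix `z` commuting with both `a₁` and `a₂` has `z₁₂ = z₂₃ = 0` and, when invertible, units
`z₂₂` and `z₃₃` on the diagonal. An element of `C_G(aᵢ)` is by hypothesis `aᵢⁿ z` with `z` of this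
kind, so its `g₁₂² + g₂₃²` is `(n t)²` with `t` a unit: it is zero for `n = 0`, and otherwise not a
zero divisor, because homomorphisms to `ℤ` detect nonzero elements and so `R` has no additive
torsion.
-/

section TorsionFree

variable {R : Type*}

lemma intCast_mem_nonZeroDivisors [Ring R] [IsAddTorsionFree R] {n : ℤ} (hn : n ≠ 0) :
    (n : R) ∈ nonZeroDivisors R := by
  refine mem_nonZeroDivisors_iff.mpr ⟨fun x hx => ?_, fun x hx => ?_⟩
  · rwa [← zsmul_eq_mul, IsAddTorsionFree.zsmul_eq_zero_iff_right hn] at hx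
  · rwa [← zsmul_eq_mul', IsAddTorsionFree.zsmul_eq_zero_iff_right hn] at hx

lemma sq_intCast_mul_eq_zero_or_mem_nonZeroDivisors [Ring R] [IsAddTorsionFree R] (n : ℤ) {t : R}
    (ht : IsUnit t) : (n * t) ^ 2 = 0 ∨ (n * t) ^ 2 ∈ nonZeroDivisors R := by
  rcases eq_or_ne n 0 with rfl | hn
  · simp
  · exact .inr (pow_mem (mul_mem (intCast_mem_nonZeroDivisors hn) ht.mem_nonZeroDivisors) 2)

lemma LocResZ.exists_ringHom_ne_zero [CommRing R] (hR : LocResZ R) {r : R} (hr : r ≠ 0) :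
    ∃ φ : Subring.closure {r} →+* ℤ, φ ⟨r, Subring.mem_closure_of_mem rfl⟩ ≠ 0 :=
  hR _ ⟨{r}, by rw [Finset.coe_singleton]⟩ _ (Subtype.coe_ne_coe.mp hr)

lemma LocResZ.isAddTorsionFree [CommRing R] (hR : LocResZ R) : IsAddTorsionFree R where
  nsmul_right_injective n hn := by
    refine (injective_iff_map_eq_zero (nsmulAddMonoidHom (α := R) n)).mpr fun r hnr => ?_
    by_contra hr
    obtain ⟨φ, hφ⟩ := hR.exists_ringHom_ne_zero hr
    have hnr' : n • (⟨r, Subring.mem_closure_of_mem rfl⟩ : Subring.closure {r}) = 0 :=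
      Subtype.ext hnr
    have hnφ := congrArg φ hnr'
    rw [map_nsmul, map_zero, smul_eq_zero] at hnφ
    exact hnφ.elim hn hφ

end TorsionFree

section Transvection

variable {n R : Type*} [Fintype n] [DecidableEq n] {i j : n}

lemma commute_transvection_iff_commute_single [CommRing R] {c : R} {M : Matrix n n R} :
    Commute (transvection i j c) M ↔ Commute (single i j c) M := by
  simp only [commute_iff_eq, transvection, add_mul, mul_add, one_mul, mul_one, add_right_inj]

lemma isUnit_diag_of_commute_single [CommSemiring R] {M : Matrix n n R} (hM : IsUnit M)
    (h : Commute (single i j 1) M) : IsUnit (M j j) := by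
  obtain ⟨N, hMN⟩ := hM.exists_right_inv
  refine IsUnit.of_mul_eq_one (N j j) ?_
  calc M j j * N j j = (M * N) j j := by
        rw [mul_apply, Finset.sum_eq_single_of_mem j (Finset.mem_univ j)]
        intro k _ hkj
        rw [row_eq_zero_of_commute_single h hkj, zero_mul]
    _ = 1 := by rw [hMN, one_apply_eq]

lemma val_zpow_of_val_eq_transvection [CommRing R] (hij : i ≠ j) {c : R} {u : (Matrix n n R)ˣ}
    (hu : u.val = transvection i j c) (m : ℤ) : (u ^ m).val = transvection i j (m * c) := by
  have mul_u (k : ℤ) : transvection i j (k * c) * u.val = transvection i j ((k + 1 : ℤ) * c) := by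
    rw [hu, transvection_mul_transvection_same _ _ hij, Int.cast_add, Int.cast_one, add_one_mul]
  induction m using Int.induction_on with
  | zero => simp
  | succ k ih => rw [_root_.zpow_add_one, Units.val_mul, ih, mul_u]
  | pred k ih =>
    rw [_root_.zpow_sub_one, Units.val_mul, ih, Units.mul_inv_eq_iff_eq_mul, mul_u, sub_add_cancel]

end Transvection

section Generators

variable {R : Type*} [CommRing R]

lemma val_genA1 : (genA1 R).val = transvection 1 2 1 := by
  ext i j
  fin_cases i <;> fin_cases j <;> simp [genA1, ut, transvection]

lemma val_genA2 : (genA2 R).val = transvection 0 1 1 := by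
  ext i j
  fin_cases i <;> fin_cases j <;> simp [genA2, ut, transvection]

variable {z : (Matrix (Fin 3) (Fin 3) R)ˣ}

lemma commute_single_of_commute_genA1 (h : Commute z (genA1 R)) :
    Commute (single 1 2 1) z.val := by
  rw [← commute_transvection_iff_commute_single, ← val_genA1]
  exact h.symm.units_val

lemma commute_single_of_commute_genA2 (h : Commute z (genA2 R)) :
    Commute (single 0 1 1) z.val := by
  rw [← commute_transvection_iff_commute_single, ← val_genA2]
  exact h.symm.units_val

lemma apply_zero_one_of_commute_genA1 (h : Commute z (genA1 R)) : z.val 0 1 = 0 :=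
  col_eq_zero_of_commute_single (commute_single_of_commute_genA1 h) (by decide)

lemma apply_one_two_of_commute_genA2 (h : Commute z (genA2 R)) : z.val 1 2 = 0 :=
  row_eq_zero_of_commute_single (commute_single_of_commute_genA2 h) (by decide)

lemma sq_add_sq_genA1_zpow_mul (h1 : Commute z (genA1 R)) (h2 : Commute z (genA2 R)) (n : ℤ) :
    (genA1 R ^ n * z).val 0 1 ^ 2 + (genA1 R ^ n * z).val 1 2 ^ 2 = (n * z.val 2 2) ^ 2 := by
  rw [Units.val_mul, val_zpow_of_val_eq_transvection (by decide) val_genA1,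
    transvection_mul_apply_of_ne _ _ _ _ (by decide), transvection_mul_apply_same,
    apply_zero_one_of_commute_genA1 h1, apply_one_two_of_commute_genA2 h2]
  ring

lemma sq_add_sq_genA2_zpow_mul (h1 : Commute z (genA1 R)) (h2 : Commute z (genA2 R)) (n : ℤ) :
    (genA2 R ^ n * z).val 0 1 ^ 2 + (genA2 R ^ n * z).val 1 2 ^ 2 = (n * z.val 1 1) ^ 2 := by
  rw [Units.val_mul, val_zpow_of_val_eq_transvection (by decide) val_genA2,
    transvection_mul_apply_same, transvection_mul_apply_of_ne _ _ _ _ (by decide),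
    apply_zero_one_of_commute_genA1 h1, apply_one_two_of_commute_genA2 h2]
  ring

end Generators

theorem lame_of_cyclic_centralizers_general {R : Type*} [CommRing R] [IsAddTorsionFree R]
    (G : Subgroup (Matrix (Fin 3) (Fin 3) R)ˣ) (h1 : genA1 R ∈ G) (h2 : genA2 R ∈ G)
    (hC1 : ∀ x ∈ G, x * genA1 R = genA1 R * x →
      ∃ (n : ℤ) (zc : (Matrix (Fin 3) (Fin 3) R)ˣ), zc ∈ G ∧ (∀ g ∈ G, zc * g = g * zc) ∧
        x = genA1 R ^ n * zc)
    (hC2 : ∀ y ∈ G, y * genA2 R = genA2 R * y →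
      ∃ (n : ℤ) (zc : (Matrix (Fin 3) (Fin 3) R)ˣ), zc ∈ G ∧ (∀ g ∈ G, zc * g = g * zc) ∧
        y = genA2 R ^ n * zc) :
    LameProperty R G := by
  rintro g hg (hg1 | hg2)
  · obtain ⟨n, z, -, hz, rfl⟩ := hC1 g hg hg1
    rw [sq_add_sq_genA1_zpow_mul (hz _ h1) (hz _ h2)]
    exact sq_intCast_mul_eq_zero_or_mem_nonZeroDivisors n
      (isUnit_diag_of_commute_single z.isUnit (commute_single_of_commute_genA1 (hz _ h1)))
  · obtain ⟨n, z, -, hz, rfl⟩ := hC2 g hg hg2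
    rw [sq_add_sq_genA2_zpow_mul (hz _ h1) (hz _ h2)]
    exact sq_intCast_mul_eq_zero_or_mem_nonZeroDivisors n
      (isUnit_diag_of_commute_single z.isUnit (commute_single_of_commute_genA2 (hz _ h2)))

/-- If `C_G(a₁) ⊆ ⟨a₁⟩·Z(G)` and `C_G(a₂) ⊆ ⟨a₂⟩·Z(G)`, then the
representation `G ≤ UT₃(R)` satisfies the Lame Property. -/
theorem lame_of_cyclic_centralizers (R : Type*) [CommRing R] [Nontrivial R]
    (hR : LocResZ R)
    (G : Subgroup (Matrix (Fin 3) (Fin 3) R)ˣ) (hG : G ≤ UT3 R)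
    (h1 : genA1 R ∈ G) (h2 : genA2 R ∈ G)
    (hC1 : ∀ x ∈ G, x * genA1 R = genA1 R * x →
      ∃ (n : ℤ) (zc : (Matrix (Fin 3) (Fin 3) R)ˣ), zc ∈ G ∧ (∀ g ∈ G, zc * g = g * zc) ∧
        x = genA1 R ^ n * zc)
    (hC2 : ∀ y ∈ G, y * genA2 R = genA2 R * y →
      ∃ (n : ℤ) (zc : (Matrix (Fin 3) (Fin 3) R)ˣ), zc ∈ G ∧ (∀ g ∈ G, zc * g = g * zc) ∧
        y = genA2 R ^ n * zc) :
    LameProperty R G := by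
  have := hR.isAddTorsionFree
  exact lame_of_cyclic_centralizers_general G h1 h2 hC1 hC2
end

section
/- Let L be a first-order language, T a set of L-sentences, and T_∀ the set of all universal L-sentences that are true in every model of T. Then a nonempty L-structure M is a model of T_∀ if and only if M embeds (as an L-substructure) into some model of T. -/
open FirstOrder Language

universe u v w

/-!
Universal sentences pass down along embeddings. Conversely, an embedding of `M` into `N` is the same
thing as an interpretation in `N` of names for the elements of `M` that satisfies the
quantifier-free diagram of `M`, so it suffices to find a model of `T` together with that diagram. By
compactness only finitely many conditions on a tuple `a` of `M` matter at a time; their conjunction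
`χ(a)` is a single quantifier-free condition, and if no model of `T` realized it then
`∀ x, ¬ χ(x)` would belong to `T_∀` although it fails in `M`.
-/

section UniversalFormulas

open FirstOrder.Language BoundedFormula

variable {L : FirstOrder.Language.{u, v}} {α β : Type*} {n : ℕ}

theorem isQF_iInf [Finite β] {f : β → L.BoundedFormula α n} (hf : ∀ b, (f b).IsQF) :
    (BoundedFormula.iInf f).IsQF := by
  have isQF_foldr (l : List β) : ((l.map f).foldr (· ⊓ ·) ⊤).IsQF := by
    induction l with
    | nil => exact IsQF.top
    | cons b l ih => exact (hf b).inf ih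
  exact isQF_foldr _

theorem isQF_restrictFreeVar [DecidableEq α] {φ : L.BoundedFormula α n} (hφ : φ.IsQF)
    (f : φ.freeVarFinset → β) : (φ.restrictFreeVar f).IsQF := by
  induction hφ with
  | falsum => exact isQF_bot
  | of_isAtomic hφ =>
    cases hφ with
    | equal => exact (IsAtomic.equal _ _).isQF
    | rel => exact (IsAtomic.rel _ _).isQF
  | imp _ _ ih₁ ih₂ => exact (ih₁ _).imp (ih₂ _)

theorem isUniversal_alls {φ : L.BoundedFormula α n} (hφ : φ.IsUniversal) :
    φ.alls.IsUniversal := by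
  induction n with
  | zero => exact hφ
  | succ n ih => exact ih hφ.all

theorem exists_isQF_alls_eq {φ : L.BoundedFormula α n} (hφ : φ.IsUniversal) :
    ∃ (m : ℕ) (ψ : L.BoundedFormula α m), ψ.IsQF ∧ φ.alls = ψ.alls := by
  induction hφ with
  | of_isQF hφ => exact ⟨_, _, hφ, rfl⟩
  | all _ ih => exact ih

theorem isUniversal_iff_exists_eq_alls {φ : L.Formula α} :
    IsUniversal φ ↔ ∃ (n : ℕ) (ψ : L.BoundedFormula α n), ψ.IsQF ∧ φ = ψ.alls := by
  constructor
  · exact exists_isQF_alls_eq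
  · rintro ⟨n, ψ, hψ, rfl⟩
    exact isUniversal_alls hψ.isUniversal

theorem realize_sentence_of_embedding {M N : Type*} [L.Structure M] [L.Structure N]
    {φ : L.Sentence} (hφ : IsUniversal φ) (f : M ↪[L] N) (hN : N ⊨ φ) : M ⊨ φ := by
  refine hφ.realize_embedding f ?_
  rwa [Subsingleton.elim (f ∘ default) default, Subsingleton.elim (f ∘ default) default]

/-- The universal closure of a formula: the sentence asserting that it holds for all values of its
free variables. It is the counterpart of `FirstOrder.Language.Formula.exClosure`. -/
noncomputable def allClosure [DecidableEq α] (φ : L.Formula α) : L.Sentence :=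
  Formula.iAlls φ.freeVarFinset (Formula.relabel Sum.inr (φ.restrictFreeVar id))

theorem isUniversal_allClosure [DecidableEq α] {φ : L.Formula α} (hφ : IsQF φ) :
    IsUniversal (allClosure φ) :=
  isUniversal_alls (((isQF_restrictFreeVar hφ id).relabel _).relabel _).isUniversal

theorem realize_allClosure [DecidableEq α] {M : Type*} [L.Structure M] [Nonempty M]
    {φ : L.Formula α} : M ⊨ allClosure φ ↔ ∀ v : α → M, φ.Realize v := by
  have realize_restrict (v : α → M) :
      Formula.Realize (φ.restrictFreeVar id) (fun a : φ.freeVarFinset => v a) ↔ φ.Realize v :=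
    realize_restrictFreeVar v fun _ => rfl
  have realize_iff : M ⊨ allClosure φ ↔
      ∀ x : φ.freeVarFinset → M, Formula.Realize (φ.restrictFreeVar id) x := by
    simp [allClosure, Sentence.Realize, Function.comp_def]
  rw [realize_iff]
  constructor
  · exact fun h v => (realize_restrict v).1 (h _)
  · intro h x
    obtain ⟨v, rfl⟩ := Subtype.val_injective.surjective_comp_right x
    exact (realize_restrict v).2 (h v)

end UniversalFormulas

section Diagram

open FirstOrder.Language BoundedFormula

/-- The quantifier-free diagram of `M`: the quantifier-free sentences with parameters from `M` that
are true in `M`. Such a sentence is encoded as a quantifier-free formula whose free variables are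
elements of `M`, each standing for itself. -/
def qfDiagram (L : FirstOrder.Language.{u, v}) (M : Type w) [L.Structure M] : L[[M]].Theory :=
  Formula.equivSentence '' {χ : L.Formula M | IsQF χ ∧ χ.Realize id}

variable {L : FirstOrder.Language.{u, v}} {M : Type w} [L.Structure M]
  {N : Type*} [L.Structure N] [L[[M]].Structure N] [(L.lhomWithConstants M).IsExpansionOn N]

theorem realize_con_iff_of_models_qfDiagram (hN : N ⊨ qfDiagram L M) {χ : L.Formula M}
    (hχ : IsQF χ) : χ.Realize (fun a => (L.con a : N)) ↔ χ.Realize (id : M → M) := by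
  have realize_con {χ : L.Formula M} (hχ : IsQF χ) (h : χ.Realize (id : M → M)) :
      χ.Realize (fun a => (L.con a : N)) :=
    (Formula.realize_equivSentence N χ).1 (hN.realize_of_mem _ ⟨χ, ⟨hχ, h⟩, rfl⟩)
  refine ⟨fun h => ?_, realize_con hχ⟩
  by_contra hM
  exact Formula.realize_not.1 (realize_con hχ.not (Formula.realize_not.2 hM)) h

/-- The embedding of `M` into a model of its quantifier-free diagram that sends each element to the
interpretation of its name. -/
def embeddingOfModelsQFDiagram (hN : N ⊨ qfDiagram L M) : M ↪[L] N where
  toFun a := (L.con a : N)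
  inj' a b hab := by
    have := realize_con_iff_of_models_qfDiagram hN
      (χ := (Term.var a).equal (.var b)) (IsAtomic.equal _ _).isQF
    simpa [Formula.realize_equal, hab] using this
  map_fun' f x := by
    let χ : L.Formula M := (Term.func f fun i => .var (x i)).equal (.var (Structure.funMap f x))
    have hχ : χ.Realize (id : M → M) := by simp [χ, Formula.realize_equal]
    have := (realize_con_iff_of_models_qfDiagram hN (IsAtomic.equal _ _).isQF).2 hχ
    exact (Formula.realize_equal.1 this).symm
  map_rel' r x := by
    have := realize_con_iff_of_models_qfDiagram hN
      (χ := r.formula fun i => .var (x i)) (IsAtomic.rel _ _).isQF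
    simpa only [Formula.realize_rel, Term.realize_var, id_eq, Function.comp_def] using this

end Diagram

section UniversalTheory

open FirstOrder.Language BoundedFormula

/-- The theory `T_∀` of all universal sentences that follow from `T`. -/
def universalTheory {L : FirstOrder.Language.{u, v}} (T : L.Theory) : L.Theory :=
  {φ | IsUniversal φ ∧ T ⊨ᵇ φ}

variable {L : FirstOrder.Language.{u, v}} {T : L.Theory}

theorem isSatisfiable_union_iff_forall_finset {S : L.Theory} :
    (T ∪ S).IsSatisfiable ↔
      ∀ s : Finset L.Sentence, (s : Set L.Sentence) ⊆ S → (T ∪ s : L.Theory).IsSatisfiable := by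
  classical
  refine ⟨fun h s hs => h.mono (Set.union_subset_union_right T hs), fun h => ?_⟩
  rw [Theory.isSatisfiable_iff_isFinitelySatisfiable]
  intro T₀ hT₀
  refine (h (T₀.filter (· ∈ S)) fun φ hφ => (Finset.mem_filter.1 hφ).2).mono fun φ hφ => ?_
  exact (hT₀ hφ).imp_right fun hS => Finset.mem_coe.2 (Finset.mem_filter.2 ⟨hφ, hS⟩)

variable {M : Type w} [L.Structure M] [Nonempty M]

theorem exists_model_realize_of_models_universalTheory (hM : M ⊨ universalTheory T) {α : Type*}
    {χ : L.Formula α} (hχ : IsQF χ) {a : α → M} (ha : χ.Realize a) :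
    ∃ (N : T.ModelType.{u, v, max u v}) (b : α → N), χ.Realize b := by
  classical
  by_contra! hN
  have mem : allClosure χ.not ∈ universalTheory T :=
    ⟨isUniversal_allClosure hχ.not,
      Theory.models_sentence_iff.2 fun N => realize_allClosure.2 (hN N)⟩
  exact realize_allClosure.1 (hM.realize_of_mem _ mem) a ha

theorem isSatisfiable_onTheory_union_qfDiagram (hM : M ⊨ universalTheory T) :
    ((L.lhomWithConstants M).onTheory T ∪ qfDiagram L M).IsSatisfiable := by
  classical
  rw [isSatisfiable_union_iff_forall_finset]
  intro s hs
  obtain ⟨t, ht, rfl⟩ := Finset.subset_set_image_iff.1 hs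
  let χ : L.Formula M := Formula.iInf fun ψ : t => ψ.1
  have hχ : IsQF χ := isQF_iInf fun ψ => (ht ψ.2).1
  have hχM : χ.Realize id := Formula.realize_iInf.2 fun ψ => (ht ψ.2).2
  obtain ⟨N, b, hb⟩ := exists_model_realize_of_models_universalTheory hM hχ hχM
  let : (constantsOn M).Structure N := constantsOn.structure b
  have hT : N ⊨ (L.lhomWithConstants M).onTheory T := (LHom.onTheory_model _ T).2 N.is_model
  have hD : N ⊨ (↑(t.image Formula.equivSentence) : L[[M]].Theory) := by
    refine ⟨fun φ hφ => ?_⟩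
    obtain ⟨ψ, hψ, rfl⟩ := Finset.mem_image.1 hφ
    exact (Formula.realize_equivSentence N ψ).2 (Formula.realize_iInf.1 hb ⟨ψ, hψ⟩)
  have := hT.union hD
  exact Theory.Model.isSatisfiable N

theorem exists_embedding_of_models_universalTheory (hM : M ⊨ universalTheory T) :
    ∃ N : T.ModelType.{u, v, max u v w}, Nonempty (M ↪[L] N) := by
  obtain ⟨N⟩ := isSatisfiable_onTheory_union_qfDiagram hM
  let : L.Structure N := (L.lhomWithConstants M).reduct N
  obtain ⟨hT, hD⟩ := Theory.model_union_iff.1 N.is_model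
  have : N ⊨ T := (LHom.onTheory_model (L.lhomWithConstants M) T).1 hT
  let f : M ↪[L] N := embeddingOfModelsQFDiagram hD
  exact ⟨.of T N, ⟨f⟩⟩

end UniversalTheory

/-- A nonempty `L`-structure `M` models the universal theory `T_∀`
(all universal sentences true in every nonempty model of `T`) if and only if `M` embeds
into some nonempty model of `T`. -/
theorem models_universalTheory_iff_embeds (L : FirstOrder.Language.{u, v}) (T : L.Theory)
    (M : Type w) (iM : L.Structure M) (hM : Nonempty M) :
    (∀ φ : L.Sentence,
        ((∃ (n : ℕ) (ψ : L.BoundedFormula Empty n), ψ.IsQF ∧ φ = ψ.alls) ∧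
          ∀ (N : Type (max u v w)) (iN : L.Structure N), Nonempty N → N ⊨ T →
            N ⊨ φ) →
        M ⊨ φ) ↔
      ∃ (N : Type (max u v w)) (iN : L.Structure N), Nonempty N ∧ N ⊨ T ∧
        Nonempty (M ↪[L] N) := by
  simp only [← isUniversal_iff_exists_eq_alls]
  constructor
  · intro h
    have models_universalTheory : M ⊨ universalTheory T :=
      ⟨fun φ ⟨hφ, hTφ⟩ => h φ ⟨hφ, fun N _ _ _ => hTφ.realize_sentence N⟩⟩
    obtain ⟨N, ⟨f⟩⟩ := exists_embedding_of_models_universalTheory models_universalTheory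
    exact ⟨N, N.struc, N.nonempty', N.is_model, ⟨f⟩⟩
  · rintro ⟨N, iN, hN, hT, ⟨f⟩⟩ φ ⟨hφ, hTφ⟩
    exact realize_sentence_of_embedding hφ f (hTφ N iN hN hT)
end

section
/- Let G be a group such that the centralizer in G of every noncentral element of G is abelian (G satisfies NZCT). If G₀ is a nonabelian subgroup of G, then the center of G₀ is contained in the center of G: Z(G₀) ⊆ Z(G). -/
theorem center_subgroup_le_center_general {M : Type*} [Mul M]
    (hNZCT : ∀ g : M, g ∉ Set.center M →
      ∀ x ∈ Set.centralizer {g}, ∀ y ∈ Set.centralizer {g}, x * y = y * x)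
    (S : Set M) (hna : ∃ x ∈ S, ∃ y ∈ S, x * y ≠ y * x) :
    S.centralizer ⊆ Set.center M := by
  intro z hz
  by_contra hz_noncentral
  obtain ⟨x, hx, y, hy, hxy⟩ := hna
  have S_subset : S ⊆ Set.centralizer {z} :=
    Set.subset_centralizer_centralizer.trans
      (Set.centralizer_subset (Set.singleton_subset_iff.mpr hz))
  exact hxy (hNZCT z hz_noncentral x (S_subset hx) y (S_subset hy))

/-- If `G` satisfies NZCT (centralizers of noncentral elements are
abelian) and `G₀` is a nonabelian subgroup of `G`, then `Z(G₀) ⊆ Z(G)`. -/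
theorem center_subgroup_le_center {G : Type*} [Group G]
    (hNZCT : ∀ g : G, g ∉ Subgroup.center G →
      ∀ x ∈ Subgroup.centralizer ({g} : Set G), ∀ y ∈ Subgroup.centralizer ({g} : Set G),
        x * y = y * x)
    (G₀ : Subgroup G) (hna : ∃ x ∈ G₀, ∃ y ∈ G₀, x * y ≠ y * x) :
    ∀ z ∈ G₀, (∀ w ∈ G₀, z * w = w * z) → z ∈ Subgroup.center G := by
  intro z _ hz
  exact center_subgroup_le_center_general hNZCT G₀ hna fun w hw => (hz w hw).symm
end
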